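/- arXiv:2004.09737 — 2 statements merged into one kernel-verified Lean document; each statement's English description precedes it below -/
import Mathlib

section
/- Let p ≥ 1, 0 < s < ∞, t ∈ [0,1], and let f, g, h : ℝ^n → [0,∞) be bounded integrable functions satisfying the L_p-BBL condition: for every x ∈ supp(f), y ∈ supp(g) and λ ∈ [0,1], h((1−t)^{1/p}(1−λ)^{(p−1)/p} x + t^{1/p} λ^{(p−1)/p} y) ≥ [(1−t)^{1/p}(1−λ)^{(p−1)/p} f(x)^{1/s} + t^{1/p} λ^{(p−1)/p} g(y)^{1/s}]^s. Then ∫_{ℝ^n} h(x) dx ≥ M_{p/(n+s)}^t(∫_{ℝ^n} f(x) dx, ∫_{ℝ^n} g(x) dx). -/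
open MeasureTheory Set

/-- The `γ`-mean `M_γ^t(a,b)`. -/
noncomputable def Mmean (γ t a b : ℝ) : ℝ :=
  if 0 < a * b then ((1 - t) * a ^ γ + t * b ^ γ) ^ (1 / γ) else 0

/-!
For fixed weights `a, b ≥ 0`, write `m_s(u, v) = (a u^{1/s} + b v^{1/s})^s`. On the line, scaling
`f` and `g` to have equal suprema makes corresponding superlevel sets simultaneously nonempty, so
the one-dimensional Brunn–Minkowski inequality can be integrated over the levels; Hölder's
inequality `m_{s+r}(u u', v v') ≤ m_s(u, v) m_r(u', v')` undoes the scaling and raises the exponent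
from `s` to `s + 1`. Integrating out one coordinate at a time gives `m_{n+s}(∫ f, ∫ g) ≤ ∫ h` on
`ℝⁿ` whenever `m_s(f x, g y) ≤ h (a x + b y)`.

The `L_p` hypothesis provides such weights for every `λ`. The `λ` for which Hölder's inequality
between `(1 - t, t)` and `(1 - λ, λ)` is an equality at `(∫ f)^{1/(n+s)}` and `(∫ g)^{1/(n+s)}`
yields the `L_p` mean.
-/

open Filter
open scoped NNReal ENNReal Pointwise Topology

section WeightedPowerSum

/-- The weighted power sum `(a u^{1/s} + b v^{1/s})^s`. The weights need not add up to one. -/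
noncomputable def weightedPowerSum (a b : ℝ≥0) (s : ℝ) (u v : ℝ≥0∞) : ℝ≥0∞ :=
  (a * u ^ (1 / s) + b * v ^ (1 / s)) ^ s

variable {a b : ℝ≥0} {r s : ℝ}

lemma weightedPowerSum_mono (hs : 0 < s) {u u' v v' : ℝ≥0∞} (hu : u ≤ u') (hv : v ≤ v') :
    weightedPowerSum a b s u v ≤ weightedPowerSum a b s u' v' := by
  unfold weightedPowerSum
  gcongr

lemma weightedPowerSum_mul_left (hs : 0 < s) (c u v : ℝ≥0∞) :
    weightedPowerSum a b s (c * u) (c * v) = c * weightedPowerSum a b s u v := by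
  have hs' : 0 ≤ 1 / s := by positivity
  have hc : (c ^ (1 / s)) ^ s = c := by
    rw [← ENNReal.rpow_mul, one_div_mul_cancel hs.ne', ENNReal.rpow_one]
  simp only [weightedPowerSum, ENNReal.mul_rpow_of_nonneg _ _ hs']
  rw [mul_left_comm, mul_left_comm (b : ℝ≥0∞), ← mul_add, ENNReal.mul_rpow_of_nonneg _ _ hs.le, hc]

lemma weightedPowerSum_ne_top (hs : 0 < s) {u v : ℝ≥0∞} (hu : u ≠ ∞) (hv : v ≠ ∞) :
    weightedPowerSum a b s u v ≠ ∞ := by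
  have hs' : 0 ≤ 1 / s := by positivity
  unfold weightedPowerSum
  finiteness

lemma continuous_weightedPowerSum (a b : ℝ≥0) (s : ℝ) :
    Continuous fun q : ℝ≥0∞ × ℝ≥0∞ ↦ weightedPowerSum a b s q.1 q.2 := by
  have term (c : ℝ≥0) : Continuous fun u : ℝ≥0∞ ↦ (c : ℝ≥0∞) * u ^ (1 / s) :=
    (ENNReal.continuous_const_mul ENNReal.coe_ne_top).comp ENNReal.continuous_rpow_const
  exact ENNReal.continuous_rpow_const.comp
    (((term a).comp continuous_fst).add ((term b).comp continuous_snd))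

lemma weightedPowerSum_one (a b : ℝ≥0) (u v : ℝ≥0∞) :
    weightedPowerSum a b 1 u v = a * u + b * v := by
  simp [weightedPowerSum]

lemma weightedPowerSum_ofReal (hs : 0 < s) {u v : ℝ} (hu : 0 ≤ u) (hv : 0 ≤ v) :
    weightedPowerSum a b s (ENNReal.ofReal u) (ENNReal.ofReal v) =
      ENNReal.ofReal ((a * u ^ (1 / s) + b * v ^ (1 / s)) ^ s) := by
  have hs' : 0 ≤ 1 / s := by positivity
  rw [weightedPowerSum, ENNReal.ofReal_rpow_of_nonneg hu hs', ENNReal.ofReal_rpow_of_nonneg hv hs',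
    ← ENNReal.ofReal_coe_nnreal, ← ENNReal.ofReal_coe_nnreal, ← ENNReal.ofReal_mul a.coe_nonneg,
    ← ENNReal.ofReal_mul b.coe_nonneg, ← ENNReal.ofReal_add (by positivity) (by positivity),
    ENNReal.ofReal_rpow_of_nonneg (by positivity) hs.le]

lemma mul_mul_rpow_one_div_add (c : ℝ≥0) (hs : 0 < s) (hr : 0 < r) (u v : ℝ≥0∞) :
    c * (u * v) ^ (1 / (s + r)) =
      (c * u ^ (1 / s)) ^ (s / (s + r)) * (c * v ^ (1 / r)) ^ (r / (s + r)) := by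
  have hsr : 0 ≤ s / (s + r) := by positivity
  have hrs : 0 ≤ r / (s + r) := by positivity
  have hc : (c : ℝ≥0∞) ^ (s / (s + r)) * (c : ℝ≥0∞) ^ (r / (s + r)) = c := by
    rw [← ENNReal.rpow_add_of_nonneg _ _ hsr hrs, ← add_div, div_self (by positivity),
      ENNReal.rpow_one]
  rw [ENNReal.mul_rpow_of_nonneg _ _ hsr, ENNReal.mul_rpow_of_nonneg _ _ hrs, mul_mul_mul_comm, hc,
    ← ENNReal.rpow_mul, ← ENNReal.rpow_mul, one_div_mul_eq_div, one_div_mul_eq_div,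
    div_div_cancel_left' hs.ne', div_div_cancel_left' hr.ne', ← one_div,
    ENNReal.mul_rpow_of_nonneg _ _ (by positivity)]

lemma weightedPowerSum_mul_le (hs : 0 < s) (hr : 0 < r) (u u' v v' : ℝ≥0∞) :
    weightedPowerSum a b (s + r) (u * u') (v * v') ≤
      weightedPowerSum a b s u v * weightedPowerSum a b r u' v' := by
  have hsr : 0 < s + r := add_pos hs hr
  have conj : ((s + r) / s).HolderConjugate ((s + r) / r) := by
    rw [Real.holderConjugate_iff, one_lt_div hs, inv_div, inv_div, ← add_div, div_self hsr.ne']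
    exact ⟨by linarith, rfl⟩
  have holder := ENNReal.inner_le_Lp_mul_Lq (Finset.univ : Finset (Fin 2))
    ![(a * u ^ (1 / s)) ^ (s / (s + r)), (b * v ^ (1 / s)) ^ (s / (s + r))]
    ![(a * u' ^ (1 / r)) ^ (r / (s + r)), (b * v' ^ (1 / r)) ^ (r / (s + r))] conj
  simp only [Fin.sum_univ_two, Matrix.cons_val_zero, Matrix.cons_val_one, one_div_div,
    ← ENNReal.rpow_mul, div_mul_div_cancel₀ hsr.ne', div_self hs.ne', div_self hr.ne',
    ENNReal.rpow_one] at holder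
  calc weightedPowerSum a b (s + r) (u * u') (v * v')
      ≤ ((a * u ^ (1 / s) + b * v ^ (1 / s)) ^ (s / (s + r)) *
          (a * u' ^ (1 / r) + b * v' ^ (1 / r)) ^ (r / (s + r))) ^ (s + r) := by
        rw [weightedPowerSum, mul_mul_rpow_one_div_add a hs hr, mul_mul_rpow_one_div_add b hs hr]
        exact ENNReal.rpow_le_rpow holder hsr.le
    _ = weightedPowerSum a b s u v * weightedPowerSum a b r u' v' := by
        rw [ENNReal.mul_rpow_of_nonneg _ _ hsr.le, ← ENNReal.rpow_mul, ← ENNReal.rpow_mul,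
          div_mul_cancel₀ _ hsr.ne', div_mul_cancel₀ _ hsr.ne', weightedPowerSum, weightedPowerSum]

end WeightedPowerSum

section BrunnMinkowski

lemma volume_add_volume_le_volume_add_of_isCompact {S T : Set ℝ} (hS : IsCompact S)
    (hT : IsCompact T) (hSne : S.Nonempty) (hTne : T.Nonempty) :
    volume S + volume T ≤ volume (S + T) := by
  obtain ⟨M, hMS, hM⟩ := hS.exists_isGreatest hSne
  obtain ⟨m, hmT, hm⟩ := hT.exists_isLeast hTne
  have null_inter : volume ((m +ᵥ S) ∩ (M +ᵥ T)) = 0 := by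
    refine measure_mono_null (t := {m + M}) ?_ (measure_singleton _)
    rintro _ ⟨⟨x, hx, rfl⟩, y, hy, hxy⟩
    simp only [vadd_eq_add] at hxy ⊢
    exact le_antisymm (by linarith [hM hx]) (by linarith [hm hy])
  calc volume S + volume T = volume ((m +ᵥ S) ∪ (M +ᵥ T)) := by
        rw [measure_union₀ (hT.vadd M).measurableSet.nullMeasurableSet null_inter,
          measure_vadd, measure_vadd]
    _ ≤ volume (S + T) := by
        refine measure_mono (union_subset ?_ ?_)
        · rintro _ ⟨x, hx, rfl⟩
          exact ⟨x, hx, m, hmT, add_comm x m⟩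
        · rintro _ ⟨y, hy, rfl⟩
          exact ⟨M, hMS, y, hy, rfl⟩

lemma volume_add_volume_le_volume_add {S T : Set ℝ} (hS : MeasurableSet S) (hT : MeasurableSet T)
    (hSne : S.Nonempty) (hTne : T.Nonempty) : volume S + volume T ≤ volume (S + T) := by
  obtain ⟨x, hx⟩ := hSne
  obtain ⟨y, hy⟩ := hTne
  rw [hS.measure_eq_iSup_isCompact, hT.measure_eq_iSup_isCompact]
  simp only [iSup_and']
  refine ENNReal.biSup_add_biSup_le' ⟨∅, empty_subset _, isCompact_empty⟩
    ⟨∅, empty_subset _, isCompact_empty⟩ fun K ⟨hKS, hK⟩ L ⟨hLT, hL⟩ ↦ ?_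
  calc volume K + volume L ≤ volume (insert x K) + volume (insert y L) := by
        gcongr <;> exact subset_insert _ _
    _ ≤ volume (insert x K + insert y L) :=
        volume_add_volume_le_volume_add_of_isCompact (hK.insert x) (hL.insert y)
          (insert_nonempty _ _) (insert_nonempty _ _)
    _ ≤ volume (S + T) := by
        gcongr <;> exact insert_subset ‹_› ‹_›

lemma mul_volume_add_mul_volume_le_volume_smul_add_smul {S T : Set ℝ} (hS : MeasurableSet S)
    (hT : MeasurableSet T) (hSne : S.Nonempty) (hTne : T.Nonempty) (a b : ℝ≥0) :
    a * volume S + b * volume T ≤ volume (a • S + b • T) := by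
  have volume_smul (c : ℝ≥0) (K : Set ℝ) : volume (c • K) = c * volume K := by
    simp [NNReal.smul_def, Measure.addHaar_smul_of_nonneg _ c.coe_nonneg]
  rw [← volume_smul, ← volume_smul]
  exact volume_add_volume_le_volume_add (hS.const_smul₀ a) (hT.const_smul₀ b)
    hSne.smul_set hTne.smul_set

end BrunnMinkowski

section LIntegral

variable {α : Type*} [MeasurableSpace α] (μ : Measure α)

lemma lintegral_eq_lintegral_measure_superlevel {f : α → ℝ≥0∞} (hf : Measurable f)
    (hfin : ∀ x, f x ≠ ∞) :
    ∫⁻ x, f x ∂μ = ∫⁻ r in Ioi (0 : ℝ), μ {x | ENNReal.ofReal r < f x} := by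
  have layercake := lintegral_eq_lintegral_meas_lt μ
    (Eventually.of_forall fun x ↦ (f x).toReal_nonneg) hf.ennreal_toReal.aemeasurable
  simp only [ENNReal.ofReal_toReal (hfin _)] at layercake
  rw [layercake]
  refine setLIntegral_congr_fun measurableSet_Ioi fun r hr ↦ ?_
  simp only [ENNReal.ofReal_lt_iff_lt_toReal (le_of_lt hr) (hfin _)]

lemma measurable_measure_superlevel (f : α → ℝ≥0∞) :
    Measurable fun r : ℝ ↦ μ {x | ENNReal.ofReal r < f x} := by
  refine Antitone.measurable fun r r' hr ↦ measure_mono fun x hx ↦ ?_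
  exact (ENNReal.ofReal_le_ofReal hr).trans_lt hx

lemma tendsto_lintegral_min_natCast {f : α → ℝ≥0∞} (hf : Measurable f) :
    Tendsto (fun N : ℕ ↦ ∫⁻ x, min (f x) N ∂μ) atTop (𝓝 (∫⁻ x, f x ∂μ)) := by
  refine lintegral_tendsto_of_tendsto_of_monotone
    (fun N ↦ (hf.min measurable_const).aemeasurable)
    (Eventually.of_forall fun x N M hNM ↦ ?_) (Eventually.of_forall fun x ↦ ?_)
  · exact min_le_min_left _ (Nat.cast_le.2 hNM)
  · simpa using (tendsto_const_nhds (x := f x)).min ENNReal.tendsto_nat_nhds_top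

lemma exists_measurable_ge_ae_eq {μ : Measure α} {f : α → ℝ≥0∞} (hf : AEMeasurable f μ) :
    ∃ g, Measurable g ∧ f ≤ g ∧ f =ᵐ[μ] g := by
  classical
  obtain ⟨K, hfK, hK, hK0⟩ := exists_measurable_superset_of_null hf.ae_eq_mk
  refine ⟨K.piecewise (fun _ ↦ ∞) (hf.mk f), measurable_const.piecewise hK hf.measurable_mk,
    fun x ↦ ?_, ?_⟩
  · by_cases hx : x ∈ K
    · simp [hx]
    · have : f x = hf.mk f x := not_not.1 fun hne ↦ hx (hfK hne)
      simp [hx, this]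
  · filter_upwards [measure_eq_zero_iff_ae_notMem.1 hK0, hf.ae_eq_mk] with x hx hfx
    simp [hx, hfx]

end LIntegral

section Line

variable {a b : ℝ≥0} {f g h : ℝ → ℝ≥0∞}

lemma mul_volume_superlevel_add_le (hf : Measurable f) (hg : Measurable g)
    (hsup : ⨆ x, f x = ⨆ y, g y) (hmin : ∀ x y, min (f x) (g y) ≤ h (a • x + b • y)) (c : ℝ≥0∞) :
    a * volume {x | c < f x} + b * volume {y | c < g y} ≤
      volume {z | c < min (h z) (⨆ x, f x)} := by
  rcases lt_or_ge c (⨆ x, f x) with hc | hc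
  · have hc' : c < ⨆ y, g y := hsup ▸ hc
    have hne_f : {x | c < f x}.Nonempty := lt_iSup_iff.1 hc
    have hne_g : {y | c < g y}.Nonempty := lt_iSup_iff.1 hc'
    refine (mul_volume_add_mul_volume_le_volume_smul_add_smul (hf measurableSet_Ioi)
      (hg measurableSet_Ioi) hne_f hne_g a b).trans (measure_mono ?_)
    rintro _ ⟨_, ⟨x, hx, rfl⟩, _, ⟨y, hy, rfl⟩, rfl⟩
    exact lt_min ((lt_min hx hy).trans_le (hmin x y)) hc
  · have empty_f : {x | c < f x} = ∅ :=
      eq_empty_of_forall_notMem fun x ↦ ((le_iSup f x).trans hc).not_gt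
    have empty_g : {y | c < g y} = ∅ :=
      eq_empty_of_forall_notMem fun y ↦ ((le_iSup g y).trans (hsup ▸ hc)).not_gt
    simp [empty_f, empty_g]

lemma mul_lintegral_add_mul_lintegral_le_of_min_le (hf : Measurable f) (hg : Measurable g)
    (hh : Measurable h) (hsup : ⨆ x, f x = ⨆ y, g y) (hfin : ⨆ x, f x ≠ ∞)
    (hmin : ∀ x y, min (f x) (g y) ≤ h (a • x + b • y)) :
    a * (∫⁻ x, f x) + b * ∫⁻ y, g y ≤ ∫⁻ z, h z := by
  calc a * (∫⁻ x, f x) + b * ∫⁻ y, g y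
      = ∫⁻ r in Ioi (0 : ℝ), (a * volume {x | ENNReal.ofReal r < f x} +
          b * volume {y | ENNReal.ofReal r < g y}) := by
        rw [lintegral_eq_lintegral_measure_superlevel _ hf
            fun x ↦ ne_top_of_le_ne_top hfin (le_iSup f x),
          lintegral_eq_lintegral_measure_superlevel _ hg
            fun y ↦ ne_top_of_le_ne_top (hsup ▸ hfin) (le_iSup g y),
          lintegral_add_left ((measurable_measure_superlevel _ f).const_mul _),
          lintegral_const_mul _ (measurable_measure_superlevel _ f),
          lintegral_const_mul _ (measurable_measure_superlevel _ g)]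
    _ ≤ ∫⁻ r in Ioi (0 : ℝ), volume {z | ENNReal.ofReal r < min (h z) (⨆ x, f x)} :=
        lintegral_mono fun r ↦ mul_volume_superlevel_add_le hf hg hsup hmin _
    _ = ∫⁻ z, min (h z) (⨆ x, f x) :=
        (lintegral_eq_lintegral_measure_superlevel _ (hh.min measurable_const)
          fun z ↦ ne_top_of_le_ne_top hfin (min_le_right _ _)).symm
    _ ≤ ∫⁻ z, h z := lintegral_mono fun z ↦ min_le_left _ _

end Line

/-- The pointwise hypothesis of the Borell–Brascamp–Lieb inequality with weights `a, b`, required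
only on the supports of `f` and `g`. -/
def BBLCondition {E : Type*} [Add E] [SMul ℝ≥0 E] (a b : ℝ≥0) (s : ℝ) (f g h : E → ℝ≥0∞) : Prop :=
  ∀ x y, f x ≠ 0 → g y ≠ 0 → weightedPowerSum a b s (f x) (g y) ≤ h (a • x + b • y)

/-- The measure `μ` satisfies the Borell–Brascamp–Lieb inequality in dimension `d`: the pointwise
condition with exponent `s` passes to the integrals with exponent `d + s`. -/
def BorellBrascampLieb {E : Type*} [Add E] [SMul ℝ≥0 E] [MeasurableSpace E] (μ : Measure E)
    (d : ℝ) : Prop :=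
  ∀ ⦃a b : ℝ≥0⦄ ⦃s : ℝ⦄, 0 < s → ∀ ⦃f g h : E → ℝ≥0∞⦄,
    Measurable f → Measurable g → Measurable h → BBLCondition a b s f g h →
    ∫⁻ x, f x ∂μ ≠ 0 → ∫⁻ y, g y ∂μ ≠ 0 →
    weightedPowerSum a b (d + s) (∫⁻ x, f x ∂μ) (∫⁻ y, g y ∂μ) ≤ ∫⁻ z, h z ∂μ

namespace BBLCondition

variable {E : Type*} [Add E] [SMul ℝ≥0 E] {a b : ℝ≥0} {s : ℝ} {f f' g g' h h' : E → ℝ≥0∞}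

lemma mono (H : BBLCondition a b s f g h) (hs : 0 < s) (hf : f' ≤ f) (hg : g' ≤ g) (hh : h ≤ h') :
    BBLCondition a b s f' g' h' := by
  intro x y hx hy
  calc weightedPowerSum a b s (f' x) (g' y) ≤ weightedPowerSum a b s (f x) (g y) :=
        weightedPowerSum_mono hs (hf x) (hg y)
    _ ≤ h (a • x + b • y) :=
        H x y (ne_bot_of_le_ne_bot hx (hf x)) (ne_bot_of_le_ne_bot hy (hg y))
    _ ≤ h' (a • x + b • y) := hh _

lemma mul_min_le (H : BBLCondition a b s f g h) (hs : 0 < s) (A B : ℝ≥0∞) (x y : E) :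
    weightedPowerSum a b s A B * min (A⁻¹ * f x) (B⁻¹ * g y) ≤ h (a • x + b • y) := by
  rcases eq_or_ne (f x) 0 with hx | hx
  · simp [hx]
  rcases eq_or_ne (g y) 0 with hy | hy
  · simp [hy]
  set m := min (A⁻¹ * f x) (B⁻¹ * g y)
  have mul_inv_mul_le (C u : ℝ≥0∞) : C * (C⁻¹ * u) ≤ u := by
    rw [← mul_assoc]
    exact mul_le_of_le_one_left zero_le (ENNReal.mul_inv_le_one C)
  have hA : m * A ≤ f x := by
    rw [mul_comm]
    exact (mul_le_mul_right (min_le_left _ _) A).trans (mul_inv_mul_le A _)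
  have hB : m * B ≤ g y := by
    rw [mul_comm]
    exact (mul_le_mul_right (min_le_right _ _) B).trans (mul_inv_mul_le B _)
  calc weightedPowerSum a b s A B * m = weightedPowerSum a b s (m * A) (m * B) := by
        rw [weightedPowerSum_mul_left hs, mul_comm]
    _ ≤ weightedPowerSum a b s (f x) (g y) := weightedPowerSum_mono hs hA hB
    _ ≤ h (a • x + b • y) := H x y hx hy

end BBLCondition

section BoundedOnLine

variable {a b : ℝ≥0} {s : ℝ} {f g h : ℝ → ℝ≥0∞}

lemma weightedPowerSum_mul_lintegral_add_le (hs : 0 < s) (hf : Measurable f) (hg : Measurable g)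
    (hh : Measurable h) {A B : ℝ≥0∞} (hA : ⨆ x, A⁻¹ * f x = 1) (hB : ⨆ y, B⁻¹ * g y = 1)
    (hA_top : A ≠ ∞) (hB_top : B ≠ ∞) (H : BBLCondition a b s f g h) :
    weightedPowerSum a b s A B * (a * (∫⁻ x, A⁻¹ * f x) + b * ∫⁻ y, B⁻¹ * g y) ≤ ∫⁻ z, h z := by
  set C := weightedPowerSum a b s A B
  have hC_top : C ≠ ∞ := weightedPowerSum_ne_top hs hA_top hB_top
  rcases eq_or_ne C 0 with hC0 | hC0
  · simp [hC0]
  rw [ENNReal.mul_le_iff_le_inv hC0 hC_top, ← lintegral_const_mul _ hh]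
  refine mul_lintegral_add_mul_lintegral_le_of_min_le (hf.const_mul _) (hg.const_mul _)
    (hh.const_mul _) (hA.trans hB.symm) (hA ▸ ENNReal.one_ne_top) fun x y ↦ ?_
  exact (ENNReal.mul_le_iff_le_inv hC0 hC_top).1 (H.mul_min_le hs A B x y)

lemma weightedPowerSum_lintegral_le_of_iSup_ne_top (hs : 0 < s) (hf : Measurable f)
    (hg : Measurable g) (hh : Measurable h) (hf_top : ⨆ x, f x ≠ ∞) (hg_top : ⨆ y, g y ≠ ∞)
    (H : BBLCondition a b s f g h) (hf0 : ∫⁻ x, f x ≠ 0) (hg0 : ∫⁻ y, g y ≠ 0) :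
    weightedPowerSum a b (s + 1) (∫⁻ x, f x) (∫⁻ y, g y) ≤ ∫⁻ z, h z := by
  have iSup_ne_zero {k : ℝ → ℝ≥0∞} (hk : ∫⁻ x, k x ≠ 0) : ⨆ x, k x ≠ 0 := fun h0 ↦
    hk (by simp [ENNReal.iSup_eq_zero.1 h0])
  have iSup_normalized {k : ℝ → ℝ≥0∞} (hk : ⨆ x, k x ≠ ∞) (hk0 : ∫⁻ x, k x ≠ 0) :
      ⨆ x, (⨆ y, k y)⁻¹ * k x = 1 := by
    rw [← ENNReal.mul_iSup, ENNReal.inv_mul_cancel (iSup_ne_zero hk0) hk]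
  have lintegral_eq {k : ℝ → ℝ≥0∞} (hk : Measurable k) (hk_top : ⨆ x, k x ≠ ∞)
      (hk0 : ∫⁻ x, k x ≠ 0) : (⨆ x, k x) * ∫⁻ x, (⨆ y, k y)⁻¹ * k x = ∫⁻ x, k x := by
    rw [lintegral_const_mul _ hk, ← mul_assoc, ENNReal.mul_inv_cancel (iSup_ne_zero hk0) hk_top,
      one_mul]
  set A := ⨆ x, f x
  set B := ⨆ y, g y
  calc weightedPowerSum a b (s + 1) (∫⁻ x, f x) (∫⁻ y, g y)
      = weightedPowerSum a b (s + 1) (A * ∫⁻ x, A⁻¹ * f x) (B * ∫⁻ y, B⁻¹ * g y) := by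
        rw [lintegral_eq hf hf_top hf0, lintegral_eq hg hg_top hg0]
    _ ≤ weightedPowerSum a b s A B * (a * (∫⁻ x, A⁻¹ * f x) + b * ∫⁻ y, B⁻¹ * g y) :=
        (weightedPowerSum_mul_le hs one_pos _ _ _ _).trans_eq (by rw [weightedPowerSum_one])
    _ ≤ ∫⁻ z, h z := weightedPowerSum_mul_lintegral_add_le hs hf hg hh
        (iSup_normalized hf_top hf0) (iSup_normalized hg_top hg0) hf_top hg_top H

end BoundedOnLine

namespace BorellBrascampLieb

theorem volume_real : BorellBrascampLieb (volume : Measure ℝ) 1 := by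
  intro a b s hs f g h hf hg hh H hf0 hg0
  have lim_f := tendsto_lintegral_min_natCast volume hf
  have lim_g := tendsto_lintegral_min_natCast volume hg
  have lim := ((continuous_weightedPowerSum a b (s + 1)).tendsto _).comp (lim_f.prodMk_nhds lim_g)
  rw [add_comm]
  refine le_of_tendsto lim ?_
  filter_upwards [lim_f.eventually_ne hf0, lim_g.eventually_ne hg0] with N hfN hgN
  have iSup_min_ne_top (k : ℝ → ℝ≥0∞) : ⨆ x, min (k x) N ≠ ∞ :=
    ne_top_of_le_ne_top (ENNReal.natCast_ne_top N) (iSup_le fun x ↦ min_le_right _ _)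
  exact weightedPowerSum_lintegral_le_of_iSup_ne_top hs (hf.min measurable_const)
    (hg.min measurable_const) hh (iSup_min_ne_top f) (iSup_min_ne_top g)
    (H.mono hs (fun x ↦ min_le_left _ _) (fun y ↦ min_le_left _ _) le_rfl) hfN hgN

section LinearStructure

variable {E F : Type*} [AddCommMonoid E] [Module ℝ≥0 E] [MeasurableSpace E]
  [AddCommMonoid F] [Module ℝ≥0 F] [MeasurableSpace F] {μ : Measure E} {ν : Measure F} {d : ℝ}

theorem dirac_zero : BorellBrascampLieb (Measure.dirac (0 : E)) 0 := by
  intro a b s _ f g h hf hg hh H hf0 hg0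
  rw [lintegral_dirac' _ hf] at hf0 ⊢
  rw [lintegral_dirac' _ hg] at hg0 ⊢
  rw [lintegral_dirac' _ hh]
  simpa using H 0 0 hf0 hg0

theorem of_measurePreserving (hμ : BorellBrascampLieb μ d) {L : E →ₗ[ℝ≥0] F}
    (hL : MeasurePreserving L μ ν) : BorellBrascampLieb ν d := by
  intro a b s hs f g h hf hg hh H hf0 hg0
  rw [← hL.lintegral_comp hf] at hf0 ⊢
  rw [← hL.lintegral_comp hg] at hg0 ⊢
  rw [← hL.lintegral_comp hh]
  refine hμ hs (hf.comp hL.measurable) (hg.comp hL.measurable) (hh.comp hL.measurable)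
    (fun x y hx hy ↦ ?_) hf0 hg0
  simpa using H (L x) (L y) hx hy

end LinearStructure

section AddSMul

variable {E F : Type*} [Add E] [SMul ℝ≥0 E] [MeasurableSpace E] [Add F] [SMul ℝ≥0 F]
  [MeasurableSpace F] {μ : Measure E} {ν : Measure F} {d e : ℝ}

theorem smul_measure (hμ : BorellBrascampLieb μ d) (hd : 0 ≤ d) (c : ℝ≥0∞) :
    BorellBrascampLieb (c • μ) d := by
  intro a b s hs f g h hf hg hh H hf0 hg0
  simp only [lintegral_smul_measure, smul_eq_mul] at hf0 hg0 ⊢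
  rw [weightedPowerSum_mul_left (by positivity)]
  gcongr
  exact hμ hs hf hg hh H (right_ne_zero_of_mul hf0) (right_ne_zero_of_mul hg0)

theorem prod [SFinite ν] (hμ : BorellBrascampLieb μ d) (hν : BorellBrascampLieb ν e) (he : 0 ≤ e) :
    BorellBrascampLieb (μ.prod ν) (d + e) := by
  intro a b s hs f g h hf hg hh H hf0 hg0
  rw [lintegral_prod _ hf.aemeasurable] at hf0 ⊢
  rw [lintegral_prod _ hg.aemeasurable] at hg0 ⊢
  rw [lintegral_prod _ hh.aemeasurable, add_assoc]
  refine hμ (by positivity) hf.lintegral_prod_right' hg.lintegral_prod_right'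
    hh.lintegral_prod_right' (fun x x' hx hx' ↦ ?_) hf0 hg0
  exact hν hs (hf.comp measurable_prodMk_left) (hg.comp measurable_prodMk_left)
    (hh.comp measurable_prodMk_left) (fun y y' hy hy' ↦ H (x, y) (x', y') hy hy') hx hx'

theorem lintegral_le (hμ : BorellBrascampLieb μ d) {a b : ℝ≥0} {s : ℝ} (hs : 0 < s)
    {f g h : E → ℝ≥0∞} (hh : AEMeasurable h μ) (H : BBLCondition a b s f g h)
    (hf0 : ∫⁻ x, f x ∂μ ≠ 0) (hg0 : ∫⁻ y, g y ∂μ ≠ 0) :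
    weightedPowerSum a b (d + s) (∫⁻ x, f x ∂μ) (∫⁻ y, g y ∂μ) ≤ ∫⁻ z, h z ∂μ := by
  obtain ⟨f', hf', hf'f, f'_eq⟩ := exists_measurable_le_lintegral_eq μ f
  obtain ⟨g', hg', hg'g, g'_eq⟩ := exists_measurable_le_lintegral_eq μ g
  obtain ⟨h', hh', hhh', h'_eq⟩ := exists_measurable_ge_ae_eq hh
  rw [f'_eq] at hf0 ⊢
  rw [g'_eq] at hg0 ⊢
  rw [lintegral_congr_ae h'_eq]
  exact hμ hs hf' hg' hh' (H.mono hs hf'f hg'g hhh') hf0 hg0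

theorem integral_le (hμ : BorellBrascampLieb μ d) (hd : 0 ≤ d) {a b : ℝ≥0} {s : ℝ} (hs : 0 < s)
    {f g h : E → ℝ} (hf : 0 ≤ f) (hg : 0 ≤ g) (hh : 0 ≤ h)
    (hfi : Integrable f μ) (hgi : Integrable g μ) (hhi : Integrable h μ)
    (H : ∀ x, 0 < f x → ∀ y, 0 < g y →
      (a * f x ^ (1 / s) + b * g y ^ (1 / s)) ^ s ≤ h (a • x + b • y))
    (hf0 : 0 < ∫ x, f x ∂μ) (hg0 : 0 < ∫ y, g y ∂μ) :
    (a * (∫ x, f x ∂μ) ^ (1 / (d + s)) + b * (∫ y, g y ∂μ) ^ (1 / (d + s))) ^ (d + s)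
      ≤ ∫ z, h z ∂μ := by
  have ofReal_integral {k : E → ℝ} (hk : 0 ≤ k) (hki : Integrable k μ) :=
    ofReal_integral_eq_lintegral_ofReal hki (Eventually.of_forall hk)
  have bbl : BBLCondition a b s (fun x ↦ ENNReal.ofReal (f x)) (fun y ↦ ENNReal.ofReal (g y))
      (fun z ↦ ENNReal.ofReal (h z)) := fun x y hx hy ↦ by
    rw [weightedPowerSum_ofReal hs (hf x) (hg y)]
    exact ENNReal.ofReal_le_ofReal
      (H x (ENNReal.ofReal_ne_zero_iff.1 hx) y (ENNReal.ofReal_ne_zero_iff.1 hy))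
  have key := hμ.lintegral_le hs hhi.aemeasurable.ennreal_ofReal bbl
    (by rwa [← ofReal_integral hf hfi, ENNReal.ofReal_ne_zero_iff])
    (by rwa [← ofReal_integral hg hgi, ENNReal.ofReal_ne_zero_iff])
  rwa [← ofReal_integral hf hfi, ← ofReal_integral hg hgi, ← ofReal_integral hh hhi,
    weightedPowerSum_ofReal (by positivity) hf0.le hg0.le,
    ENNReal.ofReal_le_ofReal_iff (integral_nonneg hh)] at key

end AddSMul

theorem volume_pi_fin (n : ℕ) : BorellBrascampLieb (volume : Measure (Fin n → ℝ)) n := by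
  induction n with
  | zero =>
    have : (volume : Measure (Fin 0 → ℝ)) = Measure.dirac 0 := by
      rw [volume_pi]
      exact Measure.pi_of_empty _ _
    simpa [this] using dirac_zero (E := Fin 0 → ℝ)
  | succ n ih =>
    have cons_preserving : MeasurePreserving (Fin.consLinearEquiv ℝ≥0 fun _ : Fin (n + 1) ↦ ℝ)
        ((volume : Measure ℝ).prod volume) volume := by
      have cons_eq : ⇑(Fin.consLinearEquiv ℝ≥0 fun _ : Fin (n + 1) ↦ ℝ) =
          (MeasurableEquiv.piFinSuccAbove (fun _ ↦ ℝ) 0).symm :=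
        funext fun q ↦ (Fin.insertNth_zero' q.1 q.2).symm
      rw [cons_eq]
      exact (volume_preserving_piFinSuccAbove (fun _ ↦ ℝ) 0).symm
    rw [Nat.cast_succ, add_comm (n : ℝ) 1]
    exact (volume_real.prod ih n.cast_nonneg).of_measurePreserving
      (L := (Fin.consLinearEquiv ℝ≥0 fun _ : Fin (n + 1) ↦ ℝ).toLinearMap) cons_preserving

theorem addHaar {E : Type*} [NormedAddCommGroup E] [NormedSpace ℝ E] [FiniteDimensional ℝ E]
    [MeasurableSpace E] [BorelSpace E] (μ : Measure E) [μ.IsAddHaarMeasure] :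
    BorellBrascampLieb μ (Module.finrank ℝ E) := by
  let L : (Fin (Module.finrank ℝ E) → ℝ) ≃L[ℝ] E := ContinuousLinearEquiv.ofFinrankEq (by simp)
  have hL : MeasurePreserving L volume (volume.map L) := L.continuous.measurable.measurePreserving _
  rw [Measure.isAddLeftInvariant_eq_smul μ (volume.map L)]
  have map_bbl : BorellBrascampLieb (volume.map L) (Module.finrank ℝ E) :=
    (volume_pi_fin _).of_measurePreserving
      (L := L.toLinearEquiv.toLinearMap.restrictScalars ℝ≥0) hL
  exact map_bbl.smul_measure (Nat.cast_nonneg _) _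

end BorellBrascampLieb

section LpWeights

lemma rpow_one_div_mul_div_rpow_mul {p u A D : ℝ} (hp : 1 ≤ p) (hu : 0 ≤ u) (hA : 0 < A)
    (hD : 0 < D) :
    u ^ (1 / p) * (u * A ^ p / D) ^ ((p - 1) / p) * A = u * A ^ p / D ^ ((p - 1) / p) := by
  have hp0 : 0 < p := by linarith
  have hq : 0 ≤ (p - 1) / p := div_nonneg (by linarith) hp0.le
  have u_pow : u ^ (1 / p) * u ^ ((p - 1) / p) = u := by
    rw [← Real.rpow_add_of_nonneg hu (by positivity) hq, ← add_div, add_sub_cancel,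
      div_self hp0.ne', Real.rpow_one]
  have A_pow : A ^ (p * ((p - 1) / p)) * A = A ^ p := by
    rw [mul_div_cancel₀ _ hp0.ne', ← Real.rpow_add_one hA.ne', sub_add_cancel]
  rw [Real.div_rpow (by positivity) hD.le, Real.mul_rpow hu (by positivity), ← Real.rpow_mul hA.le]
  calc _ = (u ^ (1 / p) * u ^ ((p - 1) / p)) * (A ^ (p * ((p - 1) / p)) * A) /
        D ^ ((p - 1) / p) := by ring
    _ = u * A ^ p / D ^ ((p - 1) / p) := by rw [u_pow, A_pow]

lemma exists_lp_weight_eq {p t A B : ℝ} (hp : 1 ≤ p) (ht : t ∈ Icc (0 : ℝ) 1) (hA : 0 < A)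
    (hB : 0 < B) :
    ∃ l ∈ Icc (0 : ℝ) 1,
      (1 - t) ^ (1 / p) * (1 - l) ^ ((p - 1) / p) * A + t ^ (1 / p) * l ^ ((p - 1) / p) * B =
        ((1 - t) * A ^ p + t * B ^ p) ^ (1 / p) := by
  obtain ⟨ht0, ht1⟩ := ht
  have ht1' : 0 ≤ 1 - t := sub_nonneg.2 ht1
  have hp0 : 0 < p := by linarith
  have hAp : 0 < A ^ p := by positivity
  set D := (1 - t) * A ^ p + t * B ^ p with hD
  have hD0 : 0 < D := by
    rcases ht0.eq_or_lt with rfl | ht0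
    · simpa [hD] using hAp
    · positivity
  have one_sub_weight : 1 - t * B ^ p / D = (1 - t) * A ^ p / D := by
    rw [one_sub_div hD0.ne', hD, add_sub_cancel_right]
  have weight_le : t * B ^ p / D ≤ 1 := by
    rw [← sub_nonneg, one_sub_weight]
    positivity
  refine ⟨t * B ^ p / D, ⟨by positivity, weight_le⟩, ?_⟩
  rw [one_sub_weight, rpow_one_div_mul_div_rpow_mul hp ht1' hA hD0,
    rpow_one_div_mul_div_rpow_mul hp ht0 hB hD0, ← add_div, ← hD, div_eq_iff (by positivity),
    ← Real.rpow_add hD0, ← add_div, add_sub_cancel, div_self hp0.ne', Real.rpow_one]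

lemma exists_lp_weight_rpow_eq_Mmean {p q t F G : ℝ} (hp : 1 ≤ p)
    (ht : t ∈ Icc (0 : ℝ) 1) (hF : 0 < F) (hG : 0 < G) :
    ∃ l ∈ Icc (0 : ℝ) 1,
      ((1 - t) ^ (1 / p) * (1 - l) ^ ((p - 1) / p) * F ^ (1 / q)
          + t ^ (1 / p) * l ^ ((p - 1) / p) * G ^ (1 / q)) ^ q = Mmean (p / q) t F G := by
  obtain ⟨l, hl, weight_eq⟩ :=
    exists_lp_weight_eq hp ht (Real.rpow_pos_of_pos hF (1 / q)) (Real.rpow_pos_of_pos hG (1 / q))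
  have sum_nonneg : 0 ≤ (1 - t) * F ^ (p / q) + t * G ^ (p / q) :=
    add_nonneg (mul_nonneg (sub_nonneg.2 ht.2) (by positivity)) (mul_nonneg ht.1 (by positivity))
  refine ⟨l, hl, ?_⟩
  rw [weight_eq, Mmean, if_pos (mul_pos hF hG), ← Real.rpow_mul hF.le, ← Real.rpow_mul hG.le,
    one_div_mul_eq_div, ← Real.rpow_mul sum_nonneg, one_div_mul_eq_div, one_div_div]

end LpWeights

theorem lp_borell_brascamp_lieb_general {E : Type*} [NormedAddCommGroup E] [NormedSpace ℝ E]
    [FiniteDimensional ℝ E] [MeasurableSpace E] [BorelSpace E] (μ : Measure E)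
    [μ.IsAddHaarMeasure] {p s t : ℝ} (hp : 1 ≤ p) (hs : 0 < s) (ht : t ∈ Icc (0 : ℝ) 1)
    {f g h : E → ℝ} (hf : 0 ≤ f) (hg : 0 ≤ g) (hh : 0 ≤ h)
    (hfi : Integrable f μ) (hgi : Integrable g μ) (hhi : Integrable h μ)
    (hcond : ∀ x, 0 < f x → ∀ y, 0 < g y → ∀ l ∈ Icc (0 : ℝ) 1,
      ((1 - t) ^ (1 / p) * (1 - l) ^ ((p - 1) / p) * f x ^ (1 / s)
          + t ^ (1 / p) * l ^ ((p - 1) / p) * g y ^ (1 / s)) ^ s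
        ≤ h (((1 - t) ^ (1 / p) * (1 - l) ^ ((p - 1) / p)) • x
              + (t ^ (1 / p) * l ^ ((p - 1) / p)) • y)) :
    Mmean (p / (Module.finrank ℝ E + s)) t (∫ x, f x ∂μ) (∫ x, g x ∂μ) ≤ ∫ x, h x ∂μ := by
  by_cases hfg : 0 < (∫ x, f x ∂μ) * ∫ x, g x ∂μ
  swap
  · simpa only [Mmean, if_neg hfg] using integral_nonneg hh
  have hF : 0 < ∫ x, f x ∂μ := pos_of_mul_pos_left hfg (integral_nonneg hg)
  have hG : 0 < ∫ x, g x ∂μ := pos_of_mul_pos_right hfg (integral_nonneg hf)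
  obtain ⟨l, hl, weight_eq⟩ := exists_lp_weight_rpow_eq_Mmean hp ht hF hG
  have hcond_l := fun x hx y hy ↦ hcond x hx y hy l hl
  have ha : 0 ≤ (1 - t) ^ (1 / p) * (1 - l) ^ ((p - 1) / p) :=
    mul_nonneg (Real.rpow_nonneg (sub_nonneg.2 ht.2) _) (Real.rpow_nonneg (sub_nonneg.2 hl.2) _)
  have hb : 0 ≤ t ^ (1 / p) * l ^ ((p - 1) / p) :=
    mul_nonneg (Real.rpow_nonneg ht.1 _) (Real.rpow_nonneg hl.1 _)
  lift (1 - t) ^ (1 / p) * (1 - l) ^ ((p - 1) / p) to ℝ≥0 using ha with a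
  lift t ^ (1 / p) * l ^ ((p - 1) / p) to ℝ≥0 using hb with b
  rw [← weight_eq]
  exact (BorellBrascampLieb.addHaar μ).integral_le (Nat.cast_nonneg _) hs hf hg hh hfi hgi hhi
    hcond_l hF hG

/-- **The L_p-Borell–Brascamp–Lieb inequality.** -/
theorem lp_borell_brascamp_lieb
    (n : ℕ) (p s t : ℝ) (hp : 1 ≤ p) (hs : 0 < s) (ht : t ∈ Set.Icc (0:ℝ) 1)
    (f g h : (Fin n → ℝ) → ℝ)
    (hf0 : ∀ x, 0 ≤ f x) (hg0 : ∀ x, 0 ≤ g x) (hh0 : ∀ x, 0 ≤ h x)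
    (hfb : ∃ M : ℝ, ∀ x, f x ≤ M) (hgb : ∃ M : ℝ, ∀ x, g x ≤ M)
    (hhb : ∃ M : ℝ, ∀ x, h x ≤ M)
    (hfi : Integrable f) (hgi : Integrable g) (hhi : Integrable h)
    (hcond : ∀ x, 0 < f x → ∀ y, 0 < g y → ∀ l ∈ Set.Icc (0:ℝ) 1,
      ((1 - t) ^ (1/p) * (1 - l) ^ ((p-1)/p) * f x ^ (1/s)
          + t ^ (1/p) * l ^ ((p-1)/p) * g y ^ (1/s)) ^ s
        ≤ h (((1 - t) ^ (1/p) * (1 - l) ^ ((p-1)/p)) • x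
              + (t ^ (1/p) * l ^ ((p-1)/p)) • y)) :
    Mmean (p / (n + s)) t (∫ x, f x) (∫ x, g x) ≤ ∫ x, h x := by
  simpa using lp_borell_brascamp_lieb_general volume hp hs ht hf0 hg0 hh0 hfi hgi hhi hcond
end

section
/- Let p > 1, t ∈ [0,1], and let μ = μ₁ × ⋯ × μ_n be a product measure on ℝ^n where each μ_i is a Borel measure on ℝ having a quasi-concave density φ_i with φ_i(0) = sup φ_i. Then for any nonempty weakly unconditional measurable sets A, B ⊆ ℝ^n such that (1−t) ·_p A +_p t ·_p B is measurable and all three measures are finite, one has μ((1−t) ·_p A +_p t ·_p B)^{p/n} ≥ (1−t) μ(A)^{p/n} + t μ(B)^{p/n}. -/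
open MeasureTheory Set

/-- The `L_p`-Minkowski combination `α ·_p A +_p β ·_p B`. -/
def lpComb {V : Type*} [AddCommGroup V] [Module ℝ V] (p α β : ℝ) (A B : Set V) : Set V :=
  {z | ∃ x ∈ A, ∃ y ∈ B, ∃ l ∈ Set.Icc (0:ℝ) 1,
    z = (α ^ (1/p) * (1 - l) ^ ((p-1)/p)) • x + (β ^ (1/p) * l ^ ((p-1)/p)) • y}

/-- A set `A ⊆ ℝ^n` is weakly unconditional if replacing any subset of the coordinates of any
of its points by `0` stays inside `A`. -/
def WeaklyUnconditionalSet {n : ℕ} (A : Set (Fin n → ℝ)) : Prop :=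
  ∀ x ∈ A, ∀ ε : Fin n → Bool, (fun i => if ε i then x i else 0) ∈ A

/-!
The weights for which Hölder's inequality is an equality turn the claim into the Brunn–Minkowski
inequality with exponent `1 / n` for a single Minkowski combination `a • A + b • B ⊆ α ·_p A +_p
β ·_p B`, where a second use of Hölder's inequality gives `a + b ≤ 1`.

In dimension one, `|A + B| ≥ |A| + |B|` applied to superlevel sets shows that
`min (f x) (g y) ≤ h (a x + b y)` implies `a ∫ f + b ∫ g ≤ ∫ h` when `f` and `g` have the same
maximum, attained at `0`. Taking the density restricted to `A`, `B` and `C` for `f`, `g` and `h`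
carries the inequality from Lebesgue measure to a measure with quasi-concave density peaked at `0`.

For the inductive step, weak unconditionality makes the slice through `0` the largest one. After
division by their values at `0`, the slice measures of `A` and `B` are therefore such `f` and `g`,
the induction hypothesis bounds the slice measures of `C` from below, and Hölder's inequality
combines the exponents `1 / m` and `1` into `1 / (m + 1)`. Truncation to boxes makes the slice
measures finite.
-/

open Filter Topology
open scoped NNReal ENNReal Pointwise

section Holder

lemma holder_two_points {θ η : ℝ} (hθ : 0 ≤ θ) (hη : 0 ≤ η) (hθη : θ + η = 1)
    (a b x y z w : ℝ≥0∞) :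
    a * (x ^ θ * z ^ η) + b * (y ^ θ * w ^ η)
      ≤ (a * x + b * y) ^ θ * (a * z + b * w) ^ η := by
  have := ENNReal.lintegral_mul_norm_pow_le
    (μ := a • Measure.dirac false + b • Measure.dirac true)
    (f := fun i => cond i y x) (g := fun i => cond i w z)
    (Measurable.of_discrete.aemeasurable) (Measurable.of_discrete.aemeasurable) hθ hη hθη
  simpa [lintegral_add_measure, lintegral_smul_measure] using this

lemma exists_weights_add_le_rpow {p : ℝ} (hp : 1 ≤ p) (u v : ℝ≥0∞) :
    ∃ k l : ℝ≥0, k + l = 1 ∧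
      u + v ≤ (k ^ ((p - 1) / p) * u ^ (1 / p) + l ^ ((p - 1) / p) * v ^ (1 / p)) ^ p := by
  have hp0 : 0 < p := by linarith
  have hq : 0 ≤ (p - 1) / p := div_nonneg (by linarith) hp0.le
  have hpq : (p - 1) / p + 1 / p = 1 := by field_simp; ring
  have hp1 : 0 < 1 / p := by positivity
  rcases eq_or_ne u ∞ with rfl | hu
  · exact ⟨1, 0, by simp, by simp [hp0]⟩
  rcases eq_or_ne v ∞ with rfl | hv
  · exact ⟨0, 1, by simp, by simp [hp0]⟩
  lift u to ℝ≥0 using hu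
  lift v to ℝ≥0 using hv
  rcases eq_or_ne (u + v) 0 with hs | hs
  · exact ⟨1, 0, by simp, by simp [← ENNReal.coe_add, hs]⟩
  refine ⟨u / (u + v), v / (u + v), by rw [← add_div, div_self hs], ?_⟩
  have term (c : ℝ≥0) :
      (c / (u + v)) ^ ((p - 1) / p) * c ^ (1 / p) = c / (u + v) ^ ((p - 1) / p) := by
    rw [NNReal.div_rpow, div_mul_eq_mul_div, ← NNReal.rpow_add_of_nonneg c hq hp1.le, hpq,
      NNReal.rpow_one]
  have hsum : (u + v) / (u + v) ^ ((p - 1) / p) = (u + v) ^ (1 / p) := by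
    rw [div_eq_iff (by simp [hs]), ← NNReal.rpow_add hs, add_comm (1 / p), hpq,
      NNReal.rpow_one]
  have attained : (u + v) = ((u / (u + v)) ^ ((p - 1) / p) * u ^ (1 / p)
      + (v / (u + v)) ^ ((p - 1) / p) * v ^ (1 / p)) ^ p := by
    rw [term, term, ← add_div, hsum, ← NNReal.rpow_mul, one_div_mul_cancel hp0.ne',
      NNReal.rpow_one]
  simp only [← ENNReal.coe_rpow_of_nonneg _ hq, ← ENNReal.coe_rpow_of_nonneg _ hp1.le,
    ← ENNReal.coe_rpow_of_nonneg _ hp0.le, ← ENNReal.coe_mul, ← ENNReal.coe_add]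
  exact_mod_cast attained.le

lemma rpow_mul_rpow_add_le_one {θ η : ℝ} (hθ : 0 ≤ θ) (hη : 0 ≤ η) (hθη : θ + η = 1)
    {α β k l : ℝ≥0} (hαβ : α + β ≤ 1) (hkl : k + l ≤ 1) :
    α ^ θ * k ^ η + β ^ θ * l ^ η ≤ 1 := by
  have holder := holder_two_points hθ hη hθη 1 1 α β k l
  simp only [one_mul, ← ENNReal.coe_add] at holder
  have : ((α ^ θ * k ^ η + β ^ θ * l ^ η : ℝ≥0) : ℝ≥0∞) ≤ 1 := by
    push_cast [ENNReal.coe_rpow_of_nonneg _ hθ, ENNReal.coe_rpow_of_nonneg _ hη]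
    exact holder.trans (mul_le_one' (ENNReal.rpow_le_one (mod_cast hαβ) hθ)
      (ENNReal.rpow_le_one (mod_cast hkl) hη))
  exact_mod_cast this

end Holder

section Lebesgue

lemma volume_add_volume_le_of_isCompact {K L : Set ℝ} (hK : IsCompact K) (hL : IsCompact L)
    (hKne : K.Nonempty) (hLne : L.Nonempty) : volume K + volume L ≤ volume (K + L) := by
  obtain ⟨M, hMK, hM⟩ := hK.exists_isGreatest hKne
  obtain ⟨m, hmL, hm⟩ := hL.exists_isLeast hLne
  have hinter : (m +ᵥ K) ∩ (M +ᵥ L) ⊆ {M + m} := by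
    rintro _ ⟨⟨x, hx, rfl⟩, y, hy, hxy⟩
    have := hM hx
    have := hm hy
    simp only [vadd_eq_add, mem_singleton_iff] at hxy ⊢
    linarith
  calc volume K + volume L = volume (m +ᵥ K) + volume (M +ᵥ L) := by
        rw [measure_vadd, measure_vadd]
    _ = volume ((m +ᵥ K) ∪ (M +ᵥ L)) := by
        rw [← measure_union_add_inter _ (hL.vadd M).measurableSet,
          measure_mono_null hinter (measure_singleton _), add_zero]
    _ ≤ volume (K + L) := by
        refine measure_mono (union_subset ?_ ?_)
        · rintro _ ⟨x, hx, rfl⟩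
          exact ⟨x, hx, m, hmL, add_comm x m⟩
        · rintro _ ⟨y, hy, rfl⟩
          exact ⟨M, hMK, y, hy, rfl⟩

lemma volume_add_volume_le {A B : Set ℝ} (hA : MeasurableSet A) (hB : MeasurableSet B)
    (hAne : A.Nonempty) (hBne : B.Nonempty) : volume A + volume B ≤ volume (A + B) := by
  obtain ⟨x, hx⟩ := hAne
  obtain ⟨y, hy⟩ := hBne
  rw [hA.measure_eq_iSup_isCompact, hB.measure_eq_iSup_isCompact]
  simp only [iSup_and']
  refine ENNReal.biSup_add_biSup_le' ⟨∅, by simp⟩ ⟨∅, by simp⟩ fun K ⟨hKA, hK⟩ L ⟨hLB, hL⟩ => ?_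
  calc volume K + volume L ≤ volume (insert x K) + volume (insert y L) := by
        gcongr <;> exact subset_insert _ _
    _ ≤ volume (insert x K + insert y L) :=
        volume_add_volume_le_of_isCompact (hK.insert x) (hL.insert y) (insert_nonempty _ _)
          (insert_nonempty _ _)
    _ ≤ volume (A + B) :=
        measure_mono (add_subset_add (insert_subset hx hKA) (insert_subset hy hLB))

end Lebesgue

section Origin

variable {E : Type*} [AddCommGroup E] [Module ℝ E]

lemma smul_add_smul_subset_of_convex {s : Set E} (hs : Convex ℝ s) (h0 : (0 : E) ∈ s)
    {a b : ℝ≥0} (hab : a + b ≤ 1) : a • s + b • s ⊆ s := by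
  rintro _ ⟨_, ⟨x, hx, rfl⟩, _, ⟨y, hy, rfl⟩, rfl⟩
  have hab' : (a : ℝ) + b ≤ 1 := mod_cast hab
  have := hs.sum_mem (t := Finset.univ) (w := ![(a : ℝ), b, 1 - a - b]) (z := ![x, y, 0])
    (by simp [Fin.forall_fin_succ]; linarith [hab']) (by simp [Fin.sum_univ_three])
    (by simp [Fin.forall_fin_succ, hx, hy, h0])
  simpa [Fin.sum_univ_three, NNReal.smul_def] using this

variable [MeasurableSpace E]

/-- The Brunn–Minkowski inequality with exponent `1` for `μ` and the fixed coefficients `a`, `b`,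
restricted to sets containing the origin. The combination `a • A + b • B` need not be measurable,
so it is replaced by an arbitrary measurable superset `C`. -/
def OriginBrunnMinkowski (a b : ℝ≥0) (μ : Measure E) : Prop :=
  ∀ ⦃A B C : Set E⦄, MeasurableSet A → MeasurableSet B → MeasurableSet C → 0 ∈ A → 0 ∈ B →
    a • A + b • B ⊆ C → a * μ A + b * μ B ≤ μ C

lemma originBrunnMinkowski_volume (a b : ℝ≥0) :
    OriginBrunnMinkowski a b (volume : Measure ℝ) := by
  intro A B C hA hB _ h0A h0B hC
  calc a * volume A + b * volume B = volume (a • A) + volume (b • B) := by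
        simp [Measure.addHaar_nnreal_smul]
    _ ≤ volume (a • A + b • B) :=
        volume_add_volume_le (hA.const_smul₀ a) (hB.const_smul₀ b)
          ⟨_, smul_mem_smul_set h0A⟩ ⟨_, smul_mem_smul_set h0B⟩
    _ ≤ volume C := measure_mono hC

lemma lintegral_eq_lintegral_meas_ofReal_le {α : Type*} [MeasurableSpace α] (μ : Measure α)
    {f : α → ℝ≥0∞} (hf : Measurable f) (hfin : ∀ x, f x ≠ ∞) :
    ∫⁻ x, f x ∂μ = ∫⁻ s in Ioi (0 : ℝ), μ {x | ENNReal.ofReal s ≤ f x} := by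
  have layercake := lintegral_eq_lintegral_meas_le μ (f := fun x => (f x).toReal)
    (ae_of_all _ fun _ => ENNReal.toReal_nonneg) hf.ennreal_toReal.aemeasurable
  simpa only [ENNReal.ofReal_toReal (hfin _), ← ENNReal.ofReal_le_iff_le_toReal (hfin _)]
    using layercake

lemma measurable_meas_ofReal_le {α : Type*} [MeasurableSpace α] (μ : Measure α) (f : α → ℝ≥0∞) :
    Measurable fun s : ℝ => μ {x | ENNReal.ofReal s ≤ f x} :=
  Antitone.measurable fun _ _ hst => measure_mono fun _ hx =>
    (ENNReal.ofReal_le_ofReal hst).trans hx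

variable {a b : ℝ≥0} {μ : Measure E}

namespace OriginBrunnMinkowski

theorem lintegral (hμ : OriginBrunnMinkowski a b μ) {f g h : E → ℝ≥0∞} (hf : Measurable f)
    (hg : Measurable g) (hh : Measurable h) (hf0 : ∀ x, f x ≤ f 0) (hg0 : ∀ y, g y ≤ g 0)
    (hfg : f 0 = g 0) (hfin : f 0 ≠ ∞) (hfgh : ∀ x y, min (f x) (g y) ≤ h (a • x + b • y)) :
    a * ∫⁻ x, f x ∂μ + b * ∫⁻ y, g y ∂μ ≤ ∫⁻ z, h z ∂μ := by
  have hlevel (s : ℝ) : a * μ {x | ENNReal.ofReal s ≤ f x} + b * μ {y | ENNReal.ofReal s ≤ g y}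
      ≤ μ {z | ENNReal.ofReal s ≤ min (h z) (f 0)} := by
    by_cases hs : ENNReal.ofReal s ≤ f 0
    · refine hμ (measurableSet_le measurable_const hf) (measurableSet_le measurable_const hg)
        (measurableSet_le measurable_const (hh.min measurable_const)) hs (hs.trans_eq hfg) ?_
      rintro _ ⟨_, ⟨x, hx, rfl⟩, _, ⟨y, hy, rfl⟩, rfl⟩
      exact le_min ((le_min hx hy).trans (hfgh x y)) hs
    · have hfs : {x | ENNReal.ofReal s ≤ f x} = ∅ :=
        eq_empty_of_forall_notMem fun x hx => hs (le_trans hx (hf0 x))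
      have hgs : {y | ENNReal.ofReal s ≤ g y} = ∅ :=
        eq_empty_of_forall_notMem fun y hy => hs (hfg ▸ le_trans hy (hg0 y))
      simp [hfs, hgs]
  calc a * ∫⁻ x, f x ∂μ + b * ∫⁻ y, g y ∂μ
      = ∫⁻ s in Ioi (0 : ℝ),
          (a * μ {x | ENNReal.ofReal s ≤ f x} + b * μ {y | ENNReal.ofReal s ≤ g y}) := by
        rw [lintegral_add_left ((measurable_meas_ofReal_le μ f).const_mul _),
          lintegral_const_mul _ (measurable_meas_ofReal_le μ f),
          lintegral_const_mul _ (measurable_meas_ofReal_le μ g),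
          lintegral_eq_lintegral_meas_ofReal_le μ hf fun x => ne_top_of_le_ne_top hfin (hf0 x),
          lintegral_eq_lintegral_meas_ofReal_le μ hg fun y =>
            ne_top_of_le_ne_top (hfg ▸ hfin) (hg0 y)]
    _ ≤ ∫⁻ s in Ioi (0 : ℝ), μ {z | ENNReal.ofReal s ≤ min (h z) (f 0)} := lintegral_mono hlevel
    _ = ∫⁻ z, min (h z) (f 0) ∂μ :=
        (lintegral_eq_lintegral_meas_ofReal_le μ (hh.min measurable_const) fun _ =>
          ne_top_of_le_ne_top hfin (min_le_right _ _)).symm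
    _ ≤ ∫⁻ z, h z ∂μ := lintegral_mono fun _ => min_le_left _ _

theorem withDensity (hμ : OriginBrunnMinkowski a b μ) (hab : a + b ≤ 1) {φ : E → ℝ≥0}
    (hφm : Measurable φ) (hφ : QuasiconcaveOn ℝ univ φ) (hφ0 : ∀ x, φ x ≤ φ 0) :
    OriginBrunnMinkowski a b (μ.withDensity fun x => φ x) := by
  intro A B C hA hB hC h0A h0B hABC
  have hφC : Measurable fun x => (φ x : ℝ≥0∞) := hφm.coe_nnreal_ennreal
  have hcombine (x y : E) : min (φ x) (φ y) ≤ φ (a • x + b • y) := by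
    have hconvex : Convex ℝ {z | min (φ x) (φ y) ≤ φ z} := by
      simpa using hφ (min (φ x) (φ y))
    have hx : x ∈ {z | min (φ x) (φ y) ≤ φ z} := min_le_left (φ x) (φ y)
    have hy : y ∈ {z | min (φ x) (φ y) ≤ φ z} := min_le_right (φ x) (φ y)
    exact smul_add_smul_subset_of_convex hconvex (min_le_of_left_le (hφ0 x)) hab
      (add_mem_add (smul_mem_smul_set hx) (smul_mem_smul_set hy))
  simp only [withDensity_apply, hA, hB, hC, ← lintegral_indicator]
  refine hμ.lintegral (hφC.indicator hA) (hφC.indicator hB) (hφC.indicator hC) (fun x => ?_)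
    (fun y => ?_) ?_ ?_ fun x y => ?_
  · exact (indicator_le_self _ _ _).trans (by simpa [h0A] using hφ0 x)
  · exact (indicator_le_self _ _ _).trans (by simpa [h0B] using hφ0 y)
  · simp [h0A, h0B]
  · simp [h0A]
  · by_cases hx : x ∈ A
    · by_cases hy : y ∈ B
      · have hz : a • x + b • y ∈ C :=
          hABC (add_mem_add (smul_mem_smul_set hx) (smul_mem_smul_set hy))
        simpa [hx, hy, hz] using hcombine x y
      · simp [hy]
    · simp [hx]

theorem restrict (hμ : OriginBrunnMinkowski a b μ) (hab : a + b ≤ 1) {s : Set E}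
    (hs : MeasurableSet s) (hconvex : Convex ℝ s) (h0 : (0 : E) ∈ s) :
    OriginBrunnMinkowski a b (μ.restrict s) := by
  intro A B C hA hB hC h0A h0B hABC
  simp only [Measure.restrict_apply, hA, hB, hC]
  refine hμ (hA.inter hs) (hB.inter hs) (hC.inter hs) ⟨h0A, h0⟩ ⟨h0B, h0⟩ (subset_inter ?_ ?_)
  · exact (add_subset_add (smul_set_mono inter_subset_left)
      (smul_set_mono inter_subset_left)).trans hABC
  · exact (add_subset_add (smul_set_mono inter_subset_right)
      (smul_set_mono inter_subset_right)).trans (smul_add_smul_subset_of_convex hconvex h0 hab)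

end OriginBrunnMinkowski

lemma measurable_of_quasiconcaveOn {β : Type*} [LinearOrder β] [TopologicalSpace β]
    [OrderTopology β] [SecondCountableTopology β] [MeasurableSpace β] [BorelSpace β]
    {φ : ℝ → β} (hφ : QuasiconcaveOn ℝ univ φ) : Measurable φ :=
  measurable_of_Ici fun r => by
    have hconvex : Convex ℝ {x | r ≤ φ x} := by simpa using hφ r
    exact hconvex.ordConnected.measurableSet

end Origin

section Sections

/-- The slice `{y | (x, y) ∈ A}` of `A` over the value `x` of the zeroth coordinate. -/
def consSlice {m : ℕ} (A : Set (Fin (m + 1) → ℝ)) (x : ℝ) : Set (Fin m → ℝ) :=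
  {y | (Fin.cons x y : Fin (m + 1) → ℝ) ∈ A}

namespace WeaklyUnconditionalSet

lemma zero_mem {n : ℕ} {A : Set (Fin n → ℝ)} (hA : WeaklyUnconditionalSet A)
    (hne : A.Nonempty) : 0 ∈ A := by
  obtain ⟨x, hx⟩ := hne
  exact hA x hx fun _ => false

variable {m : ℕ} {A : Set (Fin (m + 1) → ℝ)}

lemma slice (hA : WeaklyUnconditionalSet A) (x : ℝ) :
    WeaklyUnconditionalSet (consSlice A x) := by
  intro y hy ε
  change Fin.cons x _ ∈ A
  convert hA _ hy (Fin.cons true ε) using 1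
  ext i
  cases i using Fin.cases <;> simp

lemma slice_subset_slice_zero (hA : WeaklyUnconditionalSet A) (x : ℝ) :
    consSlice A x ⊆ consSlice A 0 := by
  intro y hy
  change Fin.cons 0 y ∈ A
  convert hA _ hy (Fin.cons false fun _ => true) using 1
  ext i
  cases i using Fin.cases <;> simp

lemma zero_mem_slice_zero (hA : WeaklyUnconditionalSet A) (hne : A.Nonempty) :
    0 ∈ consSlice A 0 := by
  change Fin.cons 0 0 ∈ A
  convert hA.zero_mem hne using 1
  ext i
  cases i using Fin.cases <;> simp

end WeaklyUnconditionalSet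

lemma smul_consSlice_add_smul_consSlice_subset {m : ℕ} {A B C : Set (Fin (m + 1) → ℝ)}
    {a b : ℝ≥0} (h : a • A + b • B ⊆ C) (x y : ℝ) :
    a • consSlice A x + b • consSlice B y ⊆ consSlice C (a • x + b • y) := by
  rintro _ ⟨_, ⟨z, hz, rfl⟩, _, ⟨w, hw, rfl⟩, rfl⟩
  change Fin.cons (a • x + b • y) (a • z + b • w) ∈ C
  convert h (add_mem_add (smul_mem_smul_set hz) (smul_mem_smul_set hw)) using 1
  ext i
  cases i using Fin.cases <;> simp

variable {m : ℕ} (μ : Fin (m + 1) → Measure ℝ) [∀ i, SigmaFinite (μ i)]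
  {A : Set (Fin (m + 1) → ℝ)}

lemma prodMk_preimage_piFinSuccAbove_symm_preimage (A : Set (Fin (m + 1) → ℝ)) (x : ℝ) :
    Prod.mk x ⁻¹' ((MeasurableEquiv.piFinSuccAbove (fun _ => ℝ) 0).symm ⁻¹' A)
      = consSlice A x := by
  ext y
  simp [consSlice, MeasurableEquiv.piFinSuccAbove_symm_apply, Fin.insertNthEquiv]

lemma measurableSet_consSlice (hA : MeasurableSet A) (x : ℝ) :
    MeasurableSet (consSlice A x) := by
  rw [← prodMk_preimage_piFinSuccAbove_symm_preimage]
  exact measurable_prodMk_left ((MeasurableEquiv.piFinSuccAbove (fun _ => ℝ) 0).symm.measurable hA)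

lemma measurable_pi_consSlice (hA : MeasurableSet A) :
    Measurable fun x => Measure.pi (fun j : Fin m => μ j.succ) (consSlice A x) := by
  simpa only [prodMk_preimage_piFinSuccAbove_symm_preimage] using
    measurable_measure_prodMk_left (ν := Measure.pi fun j : Fin m => μ j.succ)
      ((measurePreserving_piFinSuccAbove μ 0).symm.measurable hA)

lemma pi_eq_lintegral_consSlice (hA : MeasurableSet A) :
    Measure.pi μ A = ∫⁻ x, Measure.pi (fun j : Fin m => μ j.succ) (consSlice A x) ∂(μ 0) := by
  have hsymm := (measurePreserving_piFinSuccAbove μ 0).symm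
  rw [← hsymm.measure_preimage hA.nullMeasurableSet, Measure.prod_apply (hsymm.measurable hA)]
  simp only [prodMk_preimage_piFinSuccAbove_symm_preimage, Fin.succAbove_zero]

end Sections

section Product

/-- The Brunn–Minkowski inequality on `ℝⁿ` with exponent `1 / n` for `μ` and the fixed coefficients
`a`, `b`, restricted to weakly unconditional sets; as in `OriginBrunnMinkowski`, the set `C` is a
measurable superset of the combination. -/
def UnconditionalBrunnMinkowski (a b : ℝ≥0) {n : ℕ} (μ : Measure (Fin n → ℝ)) : Prop :=
  ∀ ⦃A B C : Set (Fin n → ℝ)⦄, MeasurableSet A → MeasurableSet B → MeasurableSet C →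
    A.Nonempty → B.Nonempty → WeaklyUnconditionalSet A → WeaklyUnconditionalSet B →
    a • A + b • B ⊆ C →
    a * μ A ^ (1 / n : ℝ) + b * μ B ^ (1 / n : ℝ) ≤ μ C ^ (1 / n : ℝ)

variable {a b : ℝ≥0}

lemma unconditionalBrunnMinkowski_pi_fin_one {μ : Fin 1 → Measure ℝ} [∀ i, SigmaFinite (μ i)]
    (hμ : OriginBrunnMinkowski a b (μ 0)) : UnconditionalBrunnMinkowski a b (Measure.pi μ) := by
  intro A B C hA hB hC hAne hBne hAu hBu hABC
  let e := (MeasurableEquiv.funUnique (Fin 1) ℝ).symm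
  have hpi (S : Set (Fin 1 → ℝ)) : Measure.pi μ S = μ 0 (e ⁻¹' S) := by
    exact ((measurePreserving_piUnique μ).symm.measure_preimage_equiv S).symm
  simp only [hpi, Nat.cast_one, div_one, ENNReal.rpow_one]
  refine hμ (e.measurable hA) (e.measurable hB) (e.measurable hC) (hAu.zero_mem hAne)
    (hBu.zero_mem hBne) ?_
  rintro _ ⟨_, ⟨x, hx, rfl⟩, _, ⟨y, hy, rfl⟩, rfl⟩
  exact hABC (add_mem_add (smul_mem_smul_set hx) (smul_mem_smul_set hy))

/-- The case `f c = 0` needs the indicator of `{c}`: there `f / f c` is the junk value `0`, which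
is not normalized at `c`. -/
lemma exists_normalized_of_le {α : Type*} [MeasurableSpace α] [MeasurableSingletonClass α]
    {f : α → ℝ≥0∞} (hf : Measurable f) {c : α} (hfc : ∀ x, f x ≤ f c) (hfin : f c ≠ ∞) :
    ∃ F : α → ℝ≥0∞, Measurable F ∧ F c = 1 ∧ (∀ x, F x ≤ 1) ∧ (∀ x, f x = f c * F x) ∧
      ∀ x, F x ≠ 0 → x = c ∨ f x ≠ 0 := by
  rcases eq_or_ne (f c) 0 with h0 | h0
  · have hzero (x : α) : f x = 0 := le_antisymm ((hfc x).trans_eq h0) bot_le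
    refine ⟨indicator {c} 1, measurable_one.indicator (measurableSet_singleton c), by simp,
      fun x => indicator_le_self _ _ _, fun x => by simp [hzero], fun x hx => Or.inl ?_⟩
    simpa using mem_of_indicator_ne_zero hx
  · exact ⟨fun x => f x / f c, hf.div_const _, ENNReal.div_self h0 hfin,
      fun x => ENNReal.div_le_of_le_mul (by simpa using hfc x),
      fun x => (ENNReal.mul_div_cancel h0 hfin).symm,
      fun x hx => Or.inr fun hfx => hx (by simp [hfx])⟩

lemma rpow_combination_mul_le {m : ℕ} (hm : m ≠ 0) {u v w r x y : ℝ≥0∞} (hu : r * x ≤ u)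
    (hv : r * y ≤ v) (h : a * u ^ (1 / m : ℝ) + b * v ^ (1 / m : ℝ) ≤ w ^ (1 / m : ℝ)) :
    (a * x ^ (1 / m : ℝ) + b * y ^ (1 / m : ℝ)) ^ (m : ℝ) * r ≤ w := by
  have hm' : (0 : ℝ) < m := by positivity
  have hroot : (0 : ℝ) ≤ 1 / m := by positivity
  have hpow (z : ℝ≥0∞) : (z ^ (1 / m : ℝ)) ^ (m : ℝ) = z := by
    rw [← ENNReal.rpow_mul, one_div_mul_cancel hm'.ne', ENNReal.rpow_one]
  calc (a * x ^ (1 / m : ℝ) + b * y ^ (1 / m : ℝ)) ^ (m : ℝ) * r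
      = (a * (r * x) ^ (1 / m : ℝ) + b * (r * y) ^ (1 / m : ℝ)) ^ (m : ℝ) := by
        rw [ENNReal.mul_rpow_of_nonneg r x hroot, ENNReal.mul_rpow_of_nonneg r y hroot,
          mul_left_comm, mul_left_comm (b : ℝ≥0∞), ← mul_add,
          ENNReal.mul_rpow_of_nonneg _ _ hm'.le, hpow, mul_comm]
    _ ≤ (w ^ (1 / m : ℝ)) ^ (m : ℝ) := by
        refine ENNReal.rpow_le_rpow (le_trans ?_ h) hm'.le
        gcongr
    _ = w := hpow w

lemma add_mul_rpow_one_div_succ_le {m : ℕ} (hm : m ≠ 0) (x y P Q : ℝ≥0∞) :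
    a * (x * P) ^ (1 / (m + 1 : ℕ) : ℝ) + b * (y * Q) ^ (1 / (m + 1 : ℕ) : ℝ)
      ≤ ((a * x ^ (1 / m : ℝ) + b * y ^ (1 / m : ℝ)) ^ (m : ℝ) * (a * P + b * Q))
        ^ (1 / (m + 1 : ℕ) : ℝ) := by
  have hη : (0 : ℝ) ≤ 1 / (m + 1 : ℕ) := by positivity
  have hθ : (0 : ℝ) ≤ m * (1 / (m + 1 : ℕ)) := by positivity
  have hθη : (m : ℝ) * (1 / (m + 1 : ℕ)) + 1 / (m + 1 : ℕ) = 1 := by push_cast; field_simp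
  have hroot (z : ℝ≥0∞) :
      (z ^ (1 / m : ℝ)) ^ (m * (1 / (m + 1 : ℕ)) : ℝ) = z ^ (1 / (m + 1 : ℕ) : ℝ) := by
    rw [← ENNReal.rpow_mul]; congr 1; field_simp
  have := holder_two_points hθ hη hθη a b (x ^ (1 / m : ℝ)) (y ^ (1 / m : ℝ)) P Q
  rwa [hroot, hroot, ENNReal.rpow_mul, ← ENNReal.mul_rpow_of_nonneg _ _ hη,
    ← ENNReal.mul_rpow_of_nonneg _ _ hη, ← ENNReal.mul_rpow_of_nonneg _ _ hη] at this

lemma exists_slice_profile {m : ℕ} (μ : Fin (m + 1) → Measure ℝ) [∀ i, IsFiniteMeasure (μ i)]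
    {A : Set (Fin (m + 1) → ℝ)} (hA : MeasurableSet A) (hne : A.Nonempty)
    (hAu : WeaklyUnconditionalSet A) :
    ∃ f : ℝ → ℝ≥0∞, Measurable f ∧ f 0 = 1 ∧ (∀ x, f x ≤ 1) ∧
      (∀ x, Measure.pi (fun j : Fin m => μ j.succ) (consSlice A x)
        = Measure.pi (fun j : Fin m => μ j.succ) (consSlice A 0) * f x) ∧
      ∀ x, f x ≠ 0 → (consSlice A x).Nonempty := by
  obtain ⟨f, hfm, hf0, hf1, hf, hfne⟩ := exists_normalized_of_le (measurable_pi_consSlice μ hA)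
    (fun x => measure_mono (hAu.slice_subset_slice_zero x)) (measure_ne_top _ (consSlice A 0))
  refine ⟨f, hfm, hf0, hf1, hf, fun x hx => ?_⟩
  rcases hfne x hx with rfl | hx
  · exact ⟨0, hAu.zero_mem_slice_zero hne⟩
  · exact nonempty_of_measure_ne_zero hx

theorem UnconditionalBrunnMinkowski.pi_succ {m : ℕ} (hm : m ≠ 0) {μ : Fin (m + 1) → Measure ℝ}
    [∀ i, IsFiniteMeasure (μ i)] (hμ0 : OriginBrunnMinkowski a b (μ 0))
    (hμsucc : UnconditionalBrunnMinkowski a b (Measure.pi fun j : Fin m => μ j.succ)) :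
    UnconditionalBrunnMinkowski a b (Measure.pi μ) := by
  intro A B C hA hB hC hAne hBne hAu hBu hABC
  set ν := Measure.pi fun j : Fin m => μ j.succ
  obtain ⟨f, hfm, hf0, hf1, hf, hfne⟩ := exists_slice_profile μ hA hAne hAu
  obtain ⟨g, hgm, hg0, hg1, hg, hgne⟩ := exists_slice_profile μ hB hBne hBu
  set H := (a * ν (consSlice A 0) ^ (1 / m : ℝ) + b * ν (consSlice B 0) ^ (1 / m : ℝ)) ^ (m : ℝ)
  have hH : H ≠ ∞ := by simp [H, ENNReal.mul_eq_top]
  have hslice (x y : ℝ) : min (H * f x) (H * g y) ≤ ν (consSlice C (a • x + b • y)) := by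
    rcases eq_or_ne (f x) 0 with hx | hx
    · simp [hx]
    rcases eq_or_ne (g y) 0 with hy | hy
    · simp [hy]
    rw [← mul_min]
    refine rpow_combination_mul_le hm ?_ ?_ (hμsucc (measurableSet_consSlice hA x)
      (measurableSet_consSlice hB y) (measurableSet_consSlice hC _) (hfne x hx) (hgne y hy)
      (hAu.slice x) (hBu.slice y) (smul_consSlice_add_smul_consSlice_subset hABC x y))
    · rw [hf x, mul_comm]
      gcongr
      exact min_le_left _ _
    · rw [hg y, mul_comm]
      gcongr
      exact min_le_right _ _
  have hint : H * (a * ∫⁻ x, f x ∂(μ 0) + b * ∫⁻ y, g y ∂(μ 0)) ≤ Measure.pi μ C := by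
    have := hμ0.lintegral (hfm.const_mul H) (hgm.const_mul H) (measurable_pi_consSlice μ hC)
      (fun x => by gcongr; exact hf0 ▸ hf1 x) (fun y => by gcongr; exact hg0 ▸ hg1 y)
      (by rw [hf0, hg0]) (by simpa [hf0]) hslice
    rw [lintegral_const_mul _ hfm, lintegral_const_mul _ hgm] at this
    rw [pi_eq_lintegral_consSlice μ hC, mul_add, mul_left_comm H, mul_left_comm H]
    exact this
  rw [pi_eq_lintegral_consSlice μ hA, pi_eq_lintegral_consSlice μ hB, lintegral_congr hf,
    lintegral_congr hg, lintegral_const_mul _ hfm, lintegral_const_mul _ hgm]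
  exact (add_mul_rpow_one_div_succ_le hm _ _ _ _).trans (ENNReal.rpow_le_rpow hint (by positivity))

theorem unconditionalBrunnMinkowski_pi_of_isFiniteMeasure (hab : a + b ≤ 1) {n : ℕ}
    {μ : Fin n → Measure ℝ} [∀ i, IsFiniteMeasure (μ i)]
    (hμ : ∀ i, OriginBrunnMinkowski a b (μ i)) :
    UnconditionalBrunnMinkowski a b (Measure.pi μ) := by
  rcases Nat.eq_zero_or_pos n with rfl | hn
  · intro A B C _ _ _ _ _ _ _ _
    simpa using mod_cast hab
  induction n, hn using Nat.le_induction with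
  | base => exact unconditionalBrunnMinkowski_pi_fin_one (hμ 0)
  | succ m hm ih => exact (ih fun j => hμ j.succ).pi_succ (by lia) (hμ 0)

theorem unconditionalBrunnMinkowski_pi (hab : a + b ≤ 1) {n : ℕ} {μ : Fin n → Measure ℝ}
    [∀ i, IsLocallyFiniteMeasure (μ i)]
    (hμ : ∀ i, OriginBrunnMinkowski a b (μ i)) :
    UnconditionalBrunnMinkowski a b (Measure.pi μ) := by
  intro A B C hA hB hC hAne hBne hAu hBu hABC
  let box (k : ℕ) : Set (Fin n → ℝ) := univ.pi fun _ => Icc (-k : ℝ) k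
  have hbox : Monotone box := fun k l hkl =>
    pi_mono fun _ _ => Icc_subset_Icc (by gcongr) (by gcongr)
  have hunion : ⋃ k, box k = univ := by
    refine eq_univ_of_forall fun x => ?_
    obtain ⟨k, hk⟩ := exists_nat_ge ‖x‖
    exact mem_iUnion.2 ⟨k, fun i _ => abs_le.1 ((norm_le_pi_norm x i).trans hk)⟩
  have htrunc (k : ℕ) : UnconditionalBrunnMinkowski a b ((Measure.pi μ).restrict (box k)) := by
    rw [Measure.restrict_pi_pi]
    have (i : Fin n) : IsFiniteMeasure ((μ i).restrict (Icc (-k : ℝ) k)) :=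
      isFiniteMeasure_restrict.2 isCompact_Icc.measure_ne_top
    exact unconditionalBrunnMinkowski_pi_of_isFiniteMeasure hab fun i =>
      (hμ i).restrict hab measurableSet_Icc (convex_Icc _ _) (by simp)
  have hlim (S : Set (Fin n → ℝ)) (hS : MeasurableSet S) :
      Tendsto (fun k => (Measure.pi μ).restrict (box k) S ^ (1 / n : ℝ)) atTop
        (𝓝 (Measure.pi μ S ^ (1 / n : ℝ))) := by
    refine (ENNReal.continuous_rpow_const.tendsto _).comp ?_
    have := tendsto_measure_iUnion_atTop (μ := Measure.pi μ)
      (s := fun k => S ∩ box k) (fun k l hkl => inter_subset_inter_right S (hbox hkl))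
    simpa [Function.comp_def, ← inter_iUnion, hunion, Measure.restrict_apply hS] using this
  refine le_of_tendsto_of_tendsto' ((ENNReal.Tendsto.const_mul (hlim A hA) (by simp)).add
    (ENNReal.Tendsto.const_mul (hlim B hB) (by simp))) (hlim C hC) fun k =>
    htrunc k hA hB hC hAne hBne hAu hBu hABC

end Product

lemma smul_add_smul_subset_lpComb {V : Type*} [AddCommGroup V] [Module ℝ V] (p : ℝ)
    (α β : ℝ≥0) {k l : ℝ≥0} (hkl : k + l = 1) (A B : Set V) :
    (α ^ (1 / p) * k ^ ((p - 1) / p)) • A + (β ^ (1 / p) * l ^ ((p - 1) / p)) • B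
      ⊆ lpComb p α β A B := by
  rintro _ ⟨_, ⟨x, hx, rfl⟩, _, ⟨y, hy, rfl⟩, rfl⟩
  have hk : (1 : ℝ) - l = k := by rw [← NNReal.coe_one, ← hkl]; simp
  have hl : (l : ℝ) ≤ 1 := mod_cast hkl ▸ le_add_self
  exact ⟨x, hx, y, hy, l, ⟨l.2, hl⟩, by simp [hk]⟩

lemma isLocallyFiniteMeasure_withDensity_of_le {E : Type*} [MeasurableSpace E]
    [TopologicalSpace E] (μ : Measure E) [IsLocallyFiniteMeasure μ] {φ : E → ℝ≥0} {M : ℝ≥0}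
    (hφ : ∀ x, φ x ≤ M) : IsLocallyFiniteMeasure (μ.withDensity fun x => φ x) := by
  have hle : μ.withDensity (fun x => φ x) ≤ M • μ := by
    rw [ENNReal.smul_def, ← withDensity_const]
    exact withDensity_mono (ae_of_all _ fun x => ENNReal.coe_le_coe.2 (hφ x))
  exact Measure.isLocallyFiniteMeasure_of_le hle

lemma quasiconcaveOn_toNNReal_of_min_le {φ : ℝ → ℝ}
    (hφ : ∀ x y : ℝ, ∀ τ ∈ Icc (0 : ℝ) 1, min (φ x) (φ y) ≤ φ ((1 - τ) * x + τ * y)) :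
    QuasiconcaveOn ℝ univ fun x => (φ x).toNNReal := by
  refine quasiconcaveOn_iff_min_le.2 ⟨convex_univ, fun x _ y _ s τ hs hτ hsτ => ?_⟩
  obtain rfl : s = 1 - τ := by linarith
  have hmono : Monotone Real.toNNReal := fun _ _ => Real.toNNReal_le_toNNReal
  rw [← hmono.map_min]
  exact hmono (hφ x y τ ⟨hτ, sub_nonneg.1 hs⟩)

lemma toReal_rpow_combination_le {α β : ℝ≥0} {q : ℝ} (hq : 0 ≤ q) {u v w : ℝ≥0∞} (hw : w ≠ ∞)
    (h : α * u ^ q + β * v ^ q ≤ w ^ q) :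
    α * u.toReal ^ q + β * v.toReal ^ q ≤ w.toReal ^ q := by
  have hwq : w ^ q ≠ ∞ := ENNReal.rpow_ne_top_of_nonneg hq hw
  obtain ⟨hu, hv⟩ := ENNReal.add_ne_top.1 (ne_top_of_le_ne_top hwq h)
  simpa [ENNReal.toReal_add hu hv, ENNReal.toReal_rpow] using ENNReal.toReal_mono hwq h

theorem lp_brunn_minkowski_product_quasiconcave_general {n : ℕ} {p : ℝ} (hp : 1 ≤ p)
    {α β : ℝ≥0} (hαβ : α + β ≤ 1) {φ : Fin n → ℝ → ℝ≥0}
    (hφ : ∀ i, QuasiconcaveOn ℝ univ (φ i)) (hφ0 : ∀ i x, φ i x ≤ φ i 0)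
    {μ : Measure (Fin n → ℝ)}
    (hμ : μ = Measure.pi fun i => volume.withDensity fun x => (φ i x : ℝ≥0∞))
    {A B : Set (Fin n → ℝ)} (hAne : A.Nonempty) (hBne : B.Nonempty) (hA : MeasurableSet A)
    (hB : MeasurableSet B) (hAu : WeaklyUnconditionalSet A) (hBu : WeaklyUnconditionalSet B) :
    α * μ A ^ (p / n) + β * μ B ^ (p / n) ≤ μ (lpComb p α β A B) ^ (p / n) := by
  have hp0 : 0 < p := by linarith
  have hp1 : 0 ≤ 1 / p := by positivity
  have hq : 0 ≤ (p - 1) / p := div_nonneg (by linarith) hp0.le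
  have hpow (S : Set (Fin n → ℝ)) : μ S ^ (p / n) = (μ S ^ (1 / n : ℝ)) ^ p := by
    rw [← ENNReal.rpow_mul, one_div_mul_eq_div]
  have hroot (γ : ℝ≥0) (z : ℝ≥0∞) : (γ * z ^ p) ^ (1 / p) = (γ ^ (1 / p) : ℝ≥0) * z := by
    rw [ENNReal.mul_rpow_of_nonneg _ _ hp1, ← ENNReal.rpow_mul, mul_one_div_cancel hp0.ne',
      ENNReal.rpow_one, ENNReal.coe_rpow_of_nonneg _ hp1]
  obtain ⟨k, l, hkl, hle⟩ := exists_weights_add_le_rpow hp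
    (α * (μ A ^ (1 / n : ℝ)) ^ p) (β * (μ B ^ (1 / n : ℝ)) ^ p)
  have hab := rpow_mul_rpow_add_le_one hp1 hq (by field_simp; ring) hαβ hkl.le
  have (i : Fin n) := isLocallyFiniteMeasure_withDensity_of_le volume (hφ0 i)
  have hBM := unconditionalBrunnMinkowski_pi hab fun i =>
    (originBrunnMinkowski_volume _ _).withDensity hab (measurable_of_quasiconcaveOn (hφ i)) (hφ i)
      (hφ0 i)
  rw [← hμ] at hBM
  rw [hpow A, hpow B, hpow]
  refine hle.trans (ENNReal.rpow_le_rpow ?_ hp0.le)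
  rw [hroot, hroot]
  calc k ^ ((p - 1) / p) * ((α ^ (1 / p) : ℝ≥0) * μ A ^ (1 / n : ℝ))
        + l ^ ((p - 1) / p) * ((β ^ (1 / p) : ℝ≥0) * μ B ^ (1 / n : ℝ))
      = ((α ^ (1 / p) * k ^ ((p - 1) / p) : ℝ≥0) : ℝ≥0∞) * μ A ^ (1 / n : ℝ)
        + ((β ^ (1 / p) * l ^ ((p - 1) / p) : ℝ≥0) : ℝ≥0∞) * μ B ^ (1 / n : ℝ) := by
        push_cast [ENNReal.coe_rpow_of_nonneg _ hq]
        ring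
    _ ≤ μ (toMeasurable μ (lpComb p α β A B)) ^ (1 / n : ℝ) :=
        hBM hA hB (measurableSet_toMeasurable _ _) hAne hBne hAu hBu
          ((smul_add_smul_subset_lpComb p α β hkl A B).trans (subset_toMeasurable _ _))
    _ = μ (lpComb p α β A B) ^ (1 / n : ℝ) := by rw [measure_toMeasurable]

/-- **L_p-Brunn–Minkowski inequality for product measures with quasi-concave densities.** -/
theorem lp_brunn_minkowski_product_quasiconcave
    (n : ℕ) (p t : ℝ) (hp : 1 < p) (ht : t ∈ Set.Icc (0:ℝ) 1)
    (μ : Fin n → Measure ℝ) [∀ i, SigmaFinite (μ i)]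
    (φ : Fin n → ℝ → ℝ) (hφ0 : ∀ i x, 0 ≤ φ i x) (hφm : ∀ i, Measurable (φ i))
    (hμ : ∀ i, μ i = volume.withDensity (fun x => ENNReal.ofReal (φ i x)))
    (hφqc : ∀ i, ∀ x y : ℝ, ∀ τ ∈ Set.Icc (0:ℝ) 1,
      min (φ i x) (φ i y) ≤ φ i ((1 - τ) * x + τ * y))
    (hφmax : ∀ i x, φ i x ≤ φ i 0)
    (A B : Set (Fin n → ℝ)) (hAne : A.Nonempty) (hBne : B.Nonempty)
    (hA : MeasurableSet A) (hB : MeasurableSet B)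
    (hAu : WeaklyUnconditionalSet A) (hBu : WeaklyUnconditionalSet B)
    (hABm : MeasurableSet (lpComb p (1 - t) t A B))
    (hAfin : (Measure.pi μ) A ≠ ⊤) (hBfin : (Measure.pi μ) B ≠ ⊤)
    (hABfin : (Measure.pi μ) (lpComb p (1 - t) t A B) ≠ ⊤) :
    (1 - t) * ((Measure.pi μ) A).toReal ^ (p / n)
        + t * ((Measure.pi μ) B).toReal ^ (p / n)
      ≤ ((Measure.pi μ) (lpComb p (1 - t) t A B)).toReal ^ (p / n) := by
  lift t to ℝ≥0 using ht.1
  lift 1 - (t : ℝ) to ℝ≥0 using sub_nonneg.2 ht.2 with s hs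
  have hst : s + t = 1 := by exact_mod_cast (by linarith : (s : ℝ) + t = 1)
  exact toReal_rpow_combination_le (by positivity) hABfin <|
    lp_brunn_minkowski_product_quasiconcave_general hp.le hst.le
      (fun i => quasiconcaveOn_toNNReal_of_min_le (hφqc i))
      (fun i x => Real.toNNReal_le_toNNReal (hφmax i x)) (congrArg Measure.pi (funext hμ))
      hAne hBne hA hB hAu hBu
end
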